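/- arXiv:1707.02916 — 2 statements merged into one kernel-verified Lean document; each statement's English description precedes it below -/
import Mathlib

section
/- Let δ > 0, let ℓ ≥ 1 and let r₁ ≥ 1, r₂, …, r_ℓ be positive integers, and set r = r₁ + r₂ + ⋯ + r_ℓ. Then there exists ρ > 0 and n₀ such that for every d ∈ (0,1] and every (ρ,d)-dense graph G with at least n₀ vertices, t_{K(r₁,r₂,…,r_ℓ)}(G) ≥ (d^{r−r₁} − δ) · t_{K(r₁−1,r₂,…,r_ℓ)}(G). -/
open MeasureTheory

/-- The homomorphism density `t_H(G)`. -/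
noncomputable def homDensity {α β : Type*} [Fintype α] [Fintype β]
    (H : SimpleGraph α) (G : SimpleGraph β) : ℝ :=
  (Nat.card (H →g G) : ℝ) / (Fintype.card β : ℝ) ^ (Fintype.card α)

/-- The number of edges of a graph. -/
noncomputable def edgeCount {α : Type*} (H : SimpleGraph α) : ℕ :=
  Nat.card H.edgeSet

/-- `G` is `(ρ,d)`-dense: every vertex subset `X` with `|X| ≥ ρ|V(G)|`
spans at least `(d/2)|X|²` edges. -/
def LocallyDense {β : Type*} [Fintype β] (G : SimpleGraph β) (ρ d : ℝ) : Prop :=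
  ∀ X : Finset β, ρ * (Fintype.card β : ℝ) ≤ (X.card : ℝ) →
    d / 2 * (X.card : ℝ) ^ 2 ≤
      (Nat.card {e : Sym2 β // e ∈ G.edgeSet ∧ ∀ v ∈ e, v ∈ X} : ℝ)

/-!
For a graph `H` write `M s = ∑ φ, |N(φ)| ^ s`, where `φ` runs over the homomorphisms `H → G` and
`N(φ)` is the set of vertices of `G` adjacent to the whole image of `φ`. Then `M s` counts the
homomorphisms to `G` from the join of `H` with an independent set of size `s`; for
`H = K(r₂, …, r_ℓ)` the claim is a lower bound on `M r₁ / M (r₁ - 1)`. By Chebyshev's sum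
inequality the ratios `M (s + 1) / M s` are at least `M 1 / M 0`. If `H` is itself the join of
`H'` with an independent set of size `t`, then `M 0` for `H` is `M t` for `H'`, while `M 1` for `H`
is the number of stars with `t` leaves inside the sets `N(φ)`, `φ : H' → G`. Local density and
convexity bound the latter from below by `d ^ t * (M (t + 1) - ρ * |V(G)| * M t)`, with moments
of `H'`, and induction on the number of parts applies.
-/

open Finset SimpleGraph

theorem card_mul_pow_le_sum_pow {ι : Type*} {s : Finset ι} {f : ι → ℝ} {c : ℝ} (hc : 0 ≤ c)
    (hf : ∀ i ∈ s, 0 ≤ f i) (h : #s * c ≤ ∑ i ∈ s, f i) (t : ℕ) :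
    #s * c ^ t ≤ ∑ i ∈ s, f i ^ t := by
  obtain rfl | hs := s.eq_empty_or_nonempty
  · simp
  cases t with
  | zero => simp
  | succ n =>
    have : (0 : ℝ) < #s := by exact_mod_cast hs.card_pos
    refine le_trans ?_ (pow_sum_div_card_le_sum_pow hf n)
    rw [le_div_iff₀ (by positivity)]
    calc #s * c ^ (n + 1) * (#s : ℝ) ^ n = (#s * c) ^ (n + 1) := by ring
      _ ≤ (∑ i ∈ s, f i) ^ (n + 1) := by gcongr

section LocalDensity

variable {β : Type*} (G : SimpleGraph β) [DecidableRel G.Adj]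

theorem sum_card_filter_adj_eq_two_mul_card_edges [Finite β] (W : Finset β) :
    ∑ v ∈ W, #{w ∈ W | G.Adj v w} =
      2 * Nat.card {e : Sym2 β // e ∈ G.edgeSet ∧ ∀ v ∈ e, v ∈ W} := by
  classical
  have := Fintype.ofFinite β
  have h_edges : Nat.card {e : Sym2 β // e ∈ G.edgeSet ∧ ∀ v ∈ e, v ∈ W} =
      #(G.induce (W : Set β)).edgeFinset := by
    rw [← card_filter_edgeFinset_toFinset_subset, Nat.card_eq_fintype_card,
      ← Fintype.card_coe]
    simp [subset_iff]
  have h_degree (v : W) : (G.induce (W : Set β)).degree v = #{w ∈ W | G.Adj v w} := by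
    rw [← card_neighborFinset_eq_degree, ← card_map (.subtype (· ∈ (W : Set β)))]
    congr 1
    ext w
    simp [and_comm]
  rw [h_edges, ← sum_degrees_eq_twice_card_edges, ← W.sum_coe_sort]
  exact (sum_congr rfl fun v _ ↦ h_degree v).symm

theorem natCard_pi_forall_adj (W : Finset β) (v : β) (τ : Type*) [Fintype τ] :
    Nat.card {ψ : τ → W // ∀ x, G.Adj v (ψ x)} = #{w ∈ W | G.Adj v w} ^ Fintype.card τ := by
  rw [Nat.card_congr (Equiv.subtypePiEquivPi (p := fun _ (w : W) ↦ G.Adj v w)), Nat.card_fun,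
    Nat.card_eq_fintype_card, Nat.card_eq_fintype_card, Fintype.card_subtype]
  congr 1
  rw [← card_map (.subtype (· ∈ W))]
  congr 1
  ext w
  simp [and_comm]

theorem sum_card_filter_forall_adj (W : Finset β) (τ : Type*) [Fintype τ] [DecidableEq τ] :
    ∑ ψ : τ → W, #{v ∈ W | ∀ x, G.Adj v (ψ x)} =
      ∑ v ∈ W, #{w ∈ W | G.Adj v w} ^ Fintype.card τ := by
  simp_rw [← natCard_pi_forall_adj, Nat.card_eq_fintype_card, Fintype.card_subtype]
  exact sum_card_bipartiteAbove_eq_sum_card_bipartiteBelow fun (ψ : τ → W) v ↦ ∀ x, G.Adj v (ψ x)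

variable {G} [Fintype β] {ρ d : ℝ}

theorem LocallyDense.mul_card_le_sum_card_filter_adj (hG : LocallyDense G ρ d) {W : Finset β}
    (hW : ρ * Fintype.card β ≤ #W) :
    #W * (d * #W) ≤ ∑ v ∈ W, (#{w ∈ W | G.Adj v w} : ℝ) := by
  have h_sum := congrArg (Nat.cast (R := ℝ)) (sum_card_filter_adj_eq_two_mul_card_edges G W)
  push_cast at h_sum
  linarith [hG W hW]

theorem LocallyDense.le_sum_card_filter_adj_pow (hG : LocallyDense G ρ d) (hρ : 0 ≤ ρ)
    (hd : 0 ≤ d) (W : Finset β) (t : ℕ) :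
    d ^ t * ((#W : ℝ) ^ (t + 1) - ρ * Fintype.card β * (#W : ℝ) ^ t) ≤
      ∑ v ∈ W, (#{w ∈ W | G.Adj v w} : ℝ) ^ t := by
  rcases le_total (ρ * Fintype.card β) (#W : ℝ) with hW | hW
  · calc d ^ t * ((#W : ℝ) ^ (t + 1) - ρ * Fintype.card β * (#W : ℝ) ^ t)
        ≤ d ^ t * (#W : ℝ) ^ (t + 1) := by
          gcongr
          exact sub_le_self _ (by positivity)
      _ = #W * (d * #W) ^ t := by ring
      _ ≤ ∑ v ∈ W, (#{w ∈ W | G.Adj v w} : ℝ) ^ t :=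
          card_mul_pow_le_sum_pow (by positivity) (fun _ _ ↦ by positivity)
            (hG.mul_card_le_sum_card_filter_adj hW) t
  · have h_nonpos : (#W : ℝ) ^ (t + 1) - ρ * Fintype.card β * (#W : ℝ) ^ t ≤ 0 := by
      rw [pow_succ', ← sub_mul]
      exact mul_nonpos_of_nonpos_of_nonneg (sub_nonpos.2 hW) (by positivity)
    exact (mul_nonpos_of_nonneg_of_nonpos (by positivity) h_nonpos).trans (by positivity)

end LocalDensity

/-- The join of `H` with an independent set on the vertex set `τ`: it turns `K(r₂, …, r_ℓ)`
into `K(r₁, r₂, …, r_ℓ)` for `|τ| = r₁`. -/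
def joinIndep {α : Type*} (τ : Type*) (H : SimpleGraph α) : SimpleGraph (τ ⊕ α) :=
  ((⊥ : SimpleGraph τ) ⊕g H) ⊔ completeBipartiteGraph τ α

/-- The common neighbourhood `N(f)` of the vertices `f a`; it is all of `β` if `α` is empty. -/
noncomputable def commonNbhd {α β : Type*} [Fintype β] (G : SimpleGraph β) (f : α → β) :
    Finset β :=
  open Classical in {v | ∀ a, G.Adj v (f a)}

noncomputable instance {α β : Type*} [Finite α] [Finite β] (H : SimpleGraph α)
    (G : SimpleGraph β) : Fintype (H →g G) :=
  .ofFinite _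

/-- The sum `M s` of `|N(φ)| ^ s` over all homomorphisms `φ : H → G`. -/
noncomputable def nbhdMoment {α β : Type*} [Finite α] [Fintype β] (H : SimpleGraph α)
    (G : SimpleGraph β) (s : ℕ) : ℝ :=
  ∑ φ : H →g G, (#(commonNbhd G φ) : ℝ) ^ s

section Moments

variable {α α' τ β : Type*} [Fintype β] {H : SimpleGraph α} {H' : SimpleGraph α'}
  {G : SimpleGraph β}

@[simp]
theorem mem_commonNbhd {f : α → β} {v : β} : v ∈ commonNbhd G f ↔ ∀ a, G.Adj v (f a) := by
  simp [commonNbhd]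

theorem commonNbhd_comp_equiv (f : α → β) (e : α' ≃ α) :
    commonNbhd G (f ∘ e) = commonNbhd G f := by
  ext v
  simpa using e.forall_congr_right (q := fun a ↦ G.Adj v (f a))

variable (τ H G) in
/-- A homomorphism from the join of `H` with an independent set `τ` is a homomorphism `φ` from
`H` with an arbitrary map from `τ` to `N(φ)`. -/
def joinIndepHomEquiv :
    (joinIndep τ H →g G) ≃ Σ φ : H →g G, (τ → commonNbhd G φ) where
  toFun f := ⟨⟨f ∘ Sum.inr, fun h ↦ f.map_rel (by simpa [joinIndep] using h)⟩,
    fun x ↦ ⟨f (.inl x), mem_commonNbhd.2 fun a ↦ f.map_rel (by simp [joinIndep])⟩⟩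
  invFun p := ⟨Sum.elim (fun x ↦ p.2 x) p.1, by
    rintro (x | a) (y | b) h
    · simp [joinIndep] at h
    · exact mem_commonNbhd.1 (p.2 x).2 b
    · exact (mem_commonNbhd.1 (p.2 y).2 a).symm
    · exact p.1.map_rel (by simpa [joinIndep] using h)⟩
  left_inv f := by
    ext (x | a) <;> rfl
  right_inv _ := rfl

theorem mem_commonNbhd_joinIndepHomEquiv_symm {φ : H →g G} {ψ : τ → commonNbhd G φ} {v : β} :
    v ∈ commonNbhd G ((joinIndepHomEquiv τ H G).symm ⟨φ, ψ⟩) ↔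
      v ∈ commonNbhd G φ ∧ ∀ x, G.Adj v (ψ x) := by
  simp only [mem_commonNbhd, Sum.forall, and_comm]
  rfl

variable [Finite α] [Finite α']

theorem nbhdMoment_nonneg (s : ℕ) : 0 ≤ nbhdMoment H G s :=
  sum_nonneg fun _ _ ↦ by positivity

theorem nbhdMoment_congr (e : H ≃g H') (s : ℕ) : nbhdMoment H G s = nbhdMoment H' G s :=
  Fintype.sum_equiv (e.homCongr .refl) _ _ fun φ ↦
    congrArg (fun W : Finset β ↦ (#W : ℝ) ^ s) (commonNbhd_comp_equiv φ e.symm.toEquiv).symm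

theorem nbhdMoment_zero : nbhdMoment H G 0 = Nat.card (H →g G) := by
  simp [nbhdMoment]

theorem natCard_hom_joinIndep [Fintype τ] :
    (Nat.card (joinIndep τ H →g G) : ℝ) = nbhdMoment H G (Fintype.card τ) := by
  rw [Nat.card_congr (joinIndepHomEquiv τ H G), Nat.card_sigma]
  simp [nbhdMoment, Nat.card_fun, -mem_commonNbhd]

theorem nbhdMoment_joinIndep_one [Fintype τ] [DecidableRel G.Adj] :
    nbhdMoment (joinIndep τ H) G 1 = ∑ φ : H →g G, ∑ v ∈ commonNbhd G φ,
      (#{w ∈ commonNbhd G φ | G.Adj v w} : ℝ) ^ Fintype.card τ := by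
  classical
  have h_fiber (φ : H →g G) (ψ : τ → commonNbhd G φ) :
      commonNbhd G ((joinIndepHomEquiv τ H G).symm ⟨φ, ψ⟩) =
        {v ∈ commonNbhd G φ | ∀ x, G.Adj v (ψ x)} := by
    ext v
    rw [mem_commonNbhd_joinIndepHomEquiv_symm, mem_filter]
  simp only [nbhdMoment, pow_one]
  rw [← (joinIndepHomEquiv τ H G).symm.sum_comp, Fintype.sum_sigma]
  refine sum_congr rfl fun φ _ ↦ ?_
  simp only [h_fiber]
  exact_mod_cast sum_card_filter_forall_adj G (commonNbhd G φ) τ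

theorem nbhdMoment_one_mul_le (s : ℕ) :
    nbhdMoment H G 1 * nbhdMoment H G s ≤ nbhdMoment H G 0 * nbhdMoment H G (s + 1) := by
  have h_mono : Monovary (fun φ : H →g G ↦ (#(commonNbhd G φ) : ℝ))
      (fun φ ↦ (#(commonNbhd G φ) : ℝ) ^ s) := fun φ ψ h ↦
    (lt_of_pow_lt_pow_left₀ s (by positivity) h).le
  simpa [nbhdMoment, pow_succ'] using h_mono.sum_mul_sum_le_card_mul_sum

theorem mul_nbhdMoment_le_succ {c : ℝ} (h : c * nbhdMoment H G 0 ≤ nbhdMoment H G 1) (s : ℕ) :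
    c * nbhdMoment H G s ≤ nbhdMoment H G (s + 1) := by
  rcases (nbhdMoment_nonneg (H := H) (G := G) 0).eq_or_lt with h_zero | h_pos
  · have : IsEmpty (H →g G) := by
      rw [nbhdMoment_zero] at h_zero
      exact Finite.card_eq_zero_iff.1 (by exact_mod_cast h_zero.symm)
    simp [nbhdMoment]
  · refine le_of_mul_le_mul_left ?_ h_pos
    calc nbhdMoment H G 0 * (c * nbhdMoment H G s)
        = c * nbhdMoment H G 0 * nbhdMoment H G s := by ring
      _ ≤ nbhdMoment H G 1 * nbhdMoment H G s :=
          mul_le_mul_of_nonneg_right h (nbhdMoment_nonneg s)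
      _ ≤ nbhdMoment H G 0 * nbhdMoment H G (s + 1) := nbhdMoment_one_mul_le s

theorem LocallyDense.le_nbhdMoment_joinIndep_one [Fintype τ] {ρ d : ℝ}
    (hG : LocallyDense G ρ d) (hρ : 0 ≤ ρ) (hd : 0 ≤ d) :
    d ^ Fintype.card τ * (nbhdMoment H G (Fintype.card τ + 1) -
      ρ * Fintype.card β * nbhdMoment H G (Fintype.card τ)) ≤
        nbhdMoment (joinIndep τ H) G 1 := by
  classical
  rw [nbhdMoment_joinIndep_one]
  simp only [nbhdMoment]
  rw [mul_sum, ← sum_sub_distrib, mul_sum]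
  exact sum_le_sum fun φ _ ↦ hG.le_sum_card_filter_adj_pow hρ hd _ _

theorem LocallyDense.mul_nbhdMoment_joinIndep_le [Fintype τ] {ρ d c : ℝ}
    (hG : LocallyDense G ρ d) (hρ : 0 ≤ ρ) (hd : 0 ≤ d)
    (hH : c * Fintype.card β * nbhdMoment H G 0 ≤ nbhdMoment H G 1) :
    d ^ Fintype.card τ * (c - ρ) * Fintype.card β * nbhdMoment (joinIndep τ H) G 0 ≤
      nbhdMoment (joinIndep τ H) G 1 := by
  rw [nbhdMoment_zero, natCard_hom_joinIndep]
  calc d ^ Fintype.card τ * (c - ρ) * Fintype.card β * nbhdMoment H G (Fintype.card τ)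
      = d ^ Fintype.card τ * (c * Fintype.card β * nbhdMoment H G (Fintype.card τ) -
          ρ * Fintype.card β * nbhdMoment H G (Fintype.card τ)) := by ring
    _ ≤ d ^ Fintype.card τ * (nbhdMoment H G (Fintype.card τ + 1) -
          ρ * Fintype.card β * nbhdMoment H G (Fintype.card τ)) := by
        gcongr
        exact mul_nbhdMoment_le_succ hH _
    _ ≤ nbhdMoment (joinIndep τ H) G 1 := hG.le_nbhdMoment_joinIndep_one hρ hd

theorem nbhdMoment_one_of_isEmpty [IsEmpty α] :
    nbhdMoment H G 1 = Fintype.card β * nbhdMoment H G 0 := by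
  have h_univ (φ : H →g G) : commonNbhd G φ = univ := by
    ext v
    simp
  simp [nbhdMoment, h_univ]

end Moments

section CompleteMultipartite

variable {ι : Type*}

/-- Splitting off the part `i` of a complete multipartite graph. -/
noncomputable def joinIndepIsoCompleteMultipartite (V : ι → Type*) (i : ι) :
    joinIndep (V i) (completeMultipartiteGraph fun j : {j // j ≠ i} ↦ V j) ≃g
      completeMultipartiteGraph V where
  toEquiv := .ofBijective (Sum.elim (Sigma.mk i) fun x ↦ ⟨x.1, x.2⟩) <| by
    constructor
    · rintro (x | ⟨j, x⟩) (y | ⟨k, y⟩) h <;> aesop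
    · rintro ⟨j, x⟩
      obtain rfl | hj := eq_or_ne j i
      · exact ⟨.inl x, rfl⟩
      · exact ⟨.inr ⟨⟨j, hj⟩, x⟩, rfl⟩
  map_rel_iff' := by
    rintro (x | ⟨⟨j, hj⟩, x⟩) (y | ⟨⟨k, hk⟩, y⟩) <;>
      simp_all [joinIndep, Ne.symm, Equiv.ofBijective]

variable [Fintype ι] {β : Type*} [Fintype β] {G : SimpleGraph β} {ρ d : ℝ}

theorem LocallyDense.mul_nbhdMoment_completeMultipartite_zero_le (hG : LocallyDense G ρ d)
    (hρ : 0 ≤ ρ) (hd : 0 ≤ d) (hd1 : d ≤ 1) (V : ι → Type*) [∀ i, Fintype (V i)] :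
    (d ^ (∑ i, Fintype.card (V i)) - Fintype.card ι * ρ) * Fintype.card β *
        nbhdMoment (completeMultipartiteGraph V) G 0 ≤
      nbhdMoment (completeMultipartiteGraph V) G 1 := by
  classical
  induction h_card : Fintype.card ι generalizing ι with
  | zero =>
    have := Fintype.card_eq_zero_iff.1 h_card
    simp [nbhdMoment_one_of_isEmpty]
  | succ m ih =>
    obtain ⟨i⟩ : Nonempty ι := Fintype.card_pos_iff.1 (by omega)
    have ih := ih (fun j : {j // j ≠ i} ↦ V j) (by simp [h_card])
    have h_step := hG.mul_nbhdMoment_joinIndep_le (τ := V i) hρ hd ih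
    simp only [nbhdMoment_congr (joinIndepIsoCompleteMultipartite V i)] at h_step
    refine le_trans ?_ h_step
    gcongr
    · exact nbhdMoment_nonneg 0
    · have h_pow : d ^ Fintype.card (V i) ≤ 1 := pow_le_one₀ hd hd1
      have h_error := mul_le_mul_of_nonneg_right h_pow (by positivity : 0 ≤ (m + 1 : ℝ) * ρ)
      rw [Fintype.sum_eq_add_sum_subtype_ne _ i, pow_add]
      push_cast
      linarith

theorem homDensity_completeMultipartite_update [DecidableEq ι] (r : ι → ℕ) (i : ι) (t : ℕ) :
    homDensity (completeMultipartiteGraph fun j ↦ Fin (Function.update r i t j)) G =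
      nbhdMoment (completeMultipartiteGraph fun j : {j // j ≠ i} ↦ Fin (r j)) G t /
        (Fintype.card β : ℝ) ^ (t + ∑ j : {j // j ≠ i}, r j) := by
  have h_restrict : (fun j : {j // j ≠ i} ↦ Function.update r i t j) = fun j : {j // j ≠ i} ↦ r j :=
    funext fun j : {j // j ≠ i} ↦ Function.update_of_ne j.2 t r
  have h_iso := joinIndepIsoCompleteMultipartite (fun j ↦ Fin (Function.update r i t j)) i
  rw [homDensity, ← Nat.card_congr (h_iso.homCongr .refl), natCard_hom_joinIndep,
    Fintype.card_fin, Function.update_self]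
  congr 1
  · exact congrArg (fun q : {j // j ≠ i} → ℕ ↦
      nbhdMoment (completeMultipartiteGraph fun j ↦ Fin (q j)) G t) h_restrict
  · simp [Fintype.sum_eq_add_sum_subtype_ne _ i, h_restrict]

theorem stmt9_general [DecidableEq ι] [Nonempty β] (hG : LocallyDense G ρ d) (hρ : 0 ≤ ρ)
    (hd : 0 ≤ d) (hd1 : d ≤ 1) (r : ι → ℕ) (i : ι) (hi : 1 ≤ r i) :
    (d ^ ((∑ j, r j) - r i) - Fintype.card ι * ρ) *
        homDensity (completeMultipartiteGraph fun j ↦ Fin (Function.update r i (r i - 1) j)) G ≤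
      homDensity (completeMultipartiteGraph fun j ↦ Fin (r j)) G := by
  obtain ⟨s, hs⟩ : ∃ s, r i = s + 1 := ⟨r i - 1, by omega⟩
  have h_top := homDensity_completeMultipartite_update (G := G) r i (r i)
  rw [Function.update_eq_self, hs] at h_top
  rw [h_top, homDensity_completeMultipartite_update, Fintype.sum_eq_add_sum_subtype_ne _ i,
    Nat.add_sub_cancel_left, hs, Nat.add_sub_cancel]
  have h_moment := mul_nbhdMoment_le_succ
    (hG.mul_nbhdMoment_completeMultipartite_zero_le hρ hd hd1
      fun j : {j // j ≠ i} ↦ Fin (r j)) s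
  simp only [Fintype.card_fin] at h_moment
  set m := ∑ j : {j // j ≠ i}, r j
  set M := nbhdMoment (completeMultipartiteGraph fun j : {j // j ≠ i} ↦ Fin (r j)) G
  have h_nonneg : 0 ≤ M s := nbhdMoment_nonneg s
  calc (d ^ m - Fintype.card ι * ρ) * (M s / (Fintype.card β : ℝ) ^ (s + m))
      ≤ (d ^ m - Fintype.card {j // j ≠ i} * ρ) * (M s / (Fintype.card β : ℝ) ^ (s + m)) := by
        gcongr
        exact Fintype.card_subtype_le _
    _ = (d ^ m - Fintype.card {j // j ≠ i} * ρ) * Fintype.card β * M s /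
          (Fintype.card β : ℝ) ^ (s + 1 + m) := by
        field_simp
        ring
    _ ≤ M (s + 1) / (Fintype.card β : ℝ) ^ (s + 1 + m) := by gcongr

end CompleteMultipartite

theorem stmt9 (δ : ℝ) (hδ : 0 < δ) (ℓ : ℕ) (hℓ : 0 < ℓ) (r : Fin ℓ → ℕ)
    (hr : ∀ i, 1 ≤ r i) :
    ∃ (ρ : ℝ) (n₀ : ℕ), 0 < ρ ∧
      ∀ (d : ℝ), 0 < d → d ≤ 1 →
        ∀ (β : Type) [Fintype β] (G : SimpleGraph β),
          n₀ ≤ Fintype.card β → LocallyDense G ρ d →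
            homDensity
                (SimpleGraph.completeMultipartiteGraph (fun i : Fin ℓ => Fin (r i))) G
              ≥ (d ^ ((∑ i, r i) - r ⟨0, hℓ⟩) - δ) *
                homDensity
                  (SimpleGraph.completeMultipartiteGraph
                    (fun i : Fin ℓ => Fin (Function.update r ⟨0, hℓ⟩ (r ⟨0, hℓ⟩ - 1) i))) G := by
  refine ⟨δ / ℓ, 1, by positivity, fun d hd hd1 β _ G hn hG ↦ ?_⟩
  have : Nonempty β := Fintype.card_pos_iff.1 hn
  have h_error : (Fintype.card (Fin ℓ) : ℝ) * (δ / ℓ) = δ := by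
    rw [Fintype.card_fin]
    field_simp
  simpa only [h_error] using
    stmt9_general hG (by positivity) hd.le hd1 r ⟨0, hℓ⟩ (hr ⟨0, hℓ⟩)
end

section
/- For every finite simple graph G and all integers r and ℓ with 1 ≤ ℓ ≤ r, t_{P_{2ℓ}}(G) ≤ t_{P_2}(G)^{(r−ℓ)/(r−1)} · t_{P_{2r}}(G)^{(ℓ−1)/(r−1)} (for r ≥ 2; the case ℓ = r is trivial). -/
open MeasureTheory

/-!
The homomorphisms `P_n → G` are the walks of length `n`, so their number is `1ᵀ Aⁿ 1` for the
adjacency matrix `A` of `G`. Diagonalizing `A` exhibits the densities `t_{P_n}(G)` as the moments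
`∑ cᵢ xᵢⁿ` of a positive measure on the real line, supported on the eigenvalues of `A` divided by
`|V(G)|`, and by Hölder's inequality moments interpolate log-convexly between even exponents.
-/

open scoped Matrix

section Moments

variable {ι : Type*} [Fintype ι]

theorem sum_mul_pow_le_rpow_mul_rpow_of_even {c : ι → ℝ} (hc : ∀ i, 0 ≤ c i) (x : ι → ℝ)
    {a m b : ℕ} (ha : Even a) (hb : Even b) (ham : a ≤ m) (hmb : m ≤ b) (hab : a < b) :
    ∑ i, c i * x i ^ m ≤
      (∑ i, c i * x i ^ a) ^ (((b : ℝ) - m) / ((b : ℝ) - a)) *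
        (∑ i, c i * x i ^ b) ^ (((m : ℝ) - a) / ((b : ℝ) - a)) := by
  have hba : (0 : ℝ) < b - a := sub_pos.2 (Nat.cast_lt.2 hab)
  obtain rfl | ham := ham.eq_or_lt
  · simp [hba.ne']
  have hma : (0 : ℝ) < m - a := sub_pos.2 (Nat.cast_lt.2 ham)
  set p : ℝ := ((b : ℝ) - a) / ((m : ℝ) - a) with hp
  have hp_one : 1 ≤ p := (one_le_div hma).2 (by gcongr)
  have hp_inv : p⁻¹ = ((m : ℝ) - a) / ((b : ℝ) - a) := inv_div _ _
  have hp_compl : 1 - p⁻¹ = ((b : ℝ) - m) / ((b : ℝ) - a) := by rw [hp_inv]; field_simp; ring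
  have hpow : ∀ i, x i ^ a * (|x i| ^ (m - a)) ^ p = x i ^ b := fun i ↦ by
    have hexp : ((m - a : ℕ) : ℝ) * p = ((b - a : ℕ) : ℝ) := by
      rw [Nat.cast_sub ham.le, Nat.cast_sub hab.le, hp, mul_div_cancel₀ _ hma.ne']
    rw [← Real.rpow_natCast_mul (abs_nonneg _), hexp, Real.rpow_natCast, ← ha.pow_abs,
      ← pow_add, Nat.add_sub_cancel' hab.le, hb.pow_abs]
  calc ∑ i, c i * x i ^ m
      ≤ ∑ i, c i * x i ^ a * |x i| ^ (m - a) := by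
        refine Finset.sum_le_sum fun i _ ↦ ?_
        rw [mul_assoc, ← ha.pow_abs, ← pow_add, Nat.add_sub_cancel' ham.le, ← abs_pow]
        exact mul_le_mul_of_nonneg_left (le_abs_self _) (hc i)
    _ ≤ (∑ i, c i * x i ^ a) ^ (1 - p⁻¹) *
          (∑ i, c i * x i ^ a * (|x i| ^ (m - a)) ^ p) ^ p⁻¹ :=
        Real.inner_le_weight_mul_Lp_of_nonneg _ hp_one _ _
          (fun i ↦ mul_nonneg (hc i) (ha.pow_nonneg _)) fun i ↦ by positivity
    _ = _ := by rw [hp_compl, hp_inv]; simp only [mul_assoc, hpow]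

end Moments

section MatrixPowers

variable {V : Type*} [Fintype V] [DecidableEq V]

theorem dotProduct_pow_mulVec_eq_sum_prod {R : Type*} [CommSemiring R] (A : Matrix V V R)
    (n : ℕ) (u w : V → R) :
    u ⬝ᵥ (A ^ n) *ᵥ w =
      ∑ f : Fin (n + 1) → V,
        u (f 0) * (∏ i : Fin n, A (f i.castSucc) (f i.succ)) * w (f (Fin.last n)) := by
  induction n generalizing u with
  | zero => simp [← (Equiv.funUnique (Fin 1) V).symm.sum_comp, dotProduct]
  | succ n ih =>
    rw [pow_succ', ← Matrix.mulVec_mulVec, Matrix.dotProduct_mulVec, ih,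
      ← (Fin.consEquiv fun _ : Fin (n + 2) ↦ V).sum_comp, Fintype.sum_prod_type_right]
    refine Finset.sum_congr rfl fun f _ ↦ ?_
    simp only [Fin.consEquiv_apply, Fin.prod_univ_succ, Fin.cons_zero, Fin.cons_succ,
      Fin.castSucc_zero, ← Fin.succ_castSucc, ← Fin.succ_last, Matrix.vecMul, dotProduct,
      Finset.sum_mul, mul_assoc]

theorem star_dotProduct_pow_mulVec_eq_sum_eigenvalues_pow {𝕜 : Type*} [RCLike 𝕜]
    {A : Matrix V V 𝕜} (hA : A.IsHermitian) (n : ℕ) (u : V → 𝕜) :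
    star u ⬝ᵥ (A ^ n) *ᵥ u =
      ((∑ i, ‖(star (hA.eigenvectorUnitary : Matrix V V 𝕜) *ᵥ u) i‖ ^ 2 *
        hA.eigenvalues i ^ n : ℝ) : 𝕜) := by
  set U : Matrix V V 𝕜 := ↑hA.eigenvectorUnitary
  have hpow : A ^ n = U * Matrix.diagonal (fun i ↦ (hA.eigenvalues i : 𝕜) ^ n) * star U := by
    conv_lhs => rw [hA.spectral_theorem, ← map_pow, Matrix.diagonal_pow]
    rw [Unitary.conjStarAlgAut_apply]
    rfl
  have hstar : star u ᵥ* U = star (star U *ᵥ u) := by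
    rw [Matrix.star_mulVec, Matrix.star_eq_conjTranspose, Matrix.conjTranspose_conjTranspose]
  rw [hpow, ← Matrix.mulVec_mulVec, ← Matrix.mulVec_mulVec, Matrix.dotProduct_mulVec, hstar]
  simp only [dotProduct, Matrix.mulVec_diagonal, Pi.star_apply]
  push_cast
  refine Finset.sum_congr rfl fun i _ ↦ ?_
  rw [mul_left_comm, RCLike.star_def, RCLike.conj_mul, mul_comm]

end MatrixPowers

section PathHomomorphisms

variable {V : Type*} (G : SimpleGraph V)

/-- Homomorphisms from the path with `n` edges to `G` as walks of length `n` in `G`. A walk is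
encoded by its sequence of vertices, which lets walks be counted by a sum over all sequences. -/
def pathGraphHomEquiv (n : ℕ) :
    (SimpleGraph.pathGraph (n + 1) →g G) ≃
      {f : Fin (n + 1) → V // ∀ i : Fin n, G.Adj (f i.castSucc) (f i.succ)} where
  toFun φ := ⟨φ, fun i ↦ φ.map_adj (by simp [SimpleGraph.pathGraph_adj])⟩
  invFun f :=
    { toFun := f.1
      map_rel' := by
        have hstep : ∀ i j : Fin (n + 1), i.val + 1 = j.val → G.Adj (f.1 i) (f.1 j) := by
          intro i j hij
          have := f.2 ⟨i, by omega⟩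
          rwa [show Fin.succ ⟨i, _⟩ = j from Fin.ext hij] at this
        intro i j hij
        obtain h | h := SimpleGraph.pathGraph_adj.1 hij
        · exact hstep i j h
        · exact (hstep j i h).symm }

theorem card_pathGraph_hom_eq_dotProduct_adjMatrix_pow [Fintype V] [DecidableEq V]
    [DecidableRel G.Adj] (R : Type*) [CommSemiring R] (n : ℕ) :
    (Nat.card (SimpleGraph.pathGraph (n + 1) →g G) : R) = 1 ⬝ᵥ (G.adjMatrix R ^ n) *ᵥ 1 := by
  rw [Nat.card_congr (pathGraphHomEquiv G n), Nat.card_eq_fintype_card, Fintype.card_subtype,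
    Finset.natCast_card_filter, dotProduct_pow_mulVec_eq_sum_prod]
  simp only [SimpleGraph.adjMatrix_apply, Finset.prod_ite_zero, Finset.prod_const_one,
    Finset.mem_univ, forall_const, Pi.one_apply, one_mul, mul_one]

theorem exists_homDensity_pathGraph_eq_sum_mul_pow [Fintype V] :
    ∃ c x : V → ℝ, (∀ i, 0 ≤ c i) ∧
      ∀ n, homDensity (SimpleGraph.pathGraph (n + 1)) G = ∑ i, c i * x i ^ n := by
  classical
  have hA : (G.adjMatrix ℝ).IsHermitian := G.isHermitian_adjMatrix ℝ
  set N : ℝ := (Fintype.card V : ℝ)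
  refine ⟨fun i ↦ ‖(star (hA.eigenvectorUnitary : Matrix V V ℝ) *ᵥ 1) i‖ ^ 2 / N,
    fun i ↦ hA.eigenvalues i / N, fun i ↦ by positivity, fun n ↦ ?_⟩
  have hcard := star_dotProduct_pow_mulVec_eq_sum_eigenvalues_pow hA n 1
  rw [star_one, ← card_pathGraph_hom_eq_dotProduct_adjMatrix_pow, RCLike.ofReal_real_eq_id,
    id] at hcard
  rw [homDensity, hcard, Fintype.card_fin, Finset.sum_div]
  refine Finset.sum_congr rfl fun i _ ↦ ?_
  rw [div_pow, div_mul_div_comm, pow_succ' N]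

end PathHomomorphisms

theorem stmt15_general {V : Type*} [Fintype V] (G : SimpleGraph V) {a m b : ℕ}
    (ha : Even a) (hb : Even b) (ham : a ≤ m) (hmb : m ≤ b) (hab : a < b) :
    homDensity (SimpleGraph.pathGraph (m + 1)) G ≤
      homDensity (SimpleGraph.pathGraph (a + 1)) G ^ (((b : ℝ) - m) / ((b : ℝ) - a)) *
        homDensity (SimpleGraph.pathGraph (b + 1)) G ^ (((m : ℝ) - a) / ((b : ℝ) - a)) := by
  obtain ⟨c, x, hc, hmoment⟩ := exists_homDensity_pathGraph_eq_sum_mul_pow G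
  simp only [hmoment]
  exact sum_mul_pow_le_rpow_mul_rpow_of_even hc x ha hb ham hmb hab

theorem stmt15 {β : Type*} [Fintype β] (G : SimpleGraph β) (ℓ r : ℕ)
    (hℓ : 1 ≤ ℓ) (hℓr : ℓ ≤ r) (hr : 2 ≤ r) :
    homDensity (SimpleGraph.pathGraph (2 * ℓ + 1)) G ≤
      homDensity (SimpleGraph.pathGraph 3) G ^ (((r : ℝ) - ℓ) / ((r : ℝ) - 1)) *
        homDensity (SimpleGraph.pathGraph (2 * r + 1)) G ^ (((ℓ : ℝ) - 1) / ((r : ℝ) - 1)) := by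
  simpa [← mul_sub, ← mul_sub_one, mul_div_mul_left] using
    stmt15_general G (a := 2 * 1) (m := 2 * ℓ) (even_two_mul 1) (even_two_mul r)
      (by omega) (by omega) (by omega)
end
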